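/- arXiv:1807.00497 — 2 statements merged into one kernel-verified Lean document; each statement's English description precedes it below -/
import Mathlib

section
/- Let v₊, v₋ ∈ ℝ^{n+2} be null with ζ := ⟨v₊,v₋⟩ ∈ (0,1), let b > 0, and let χ:(0,b) → End(ℝ^{n+2}) be continuous and bounded with each χ(t) skew-adjoint with respect to the Minkowski form. Then there is a constant C such that for all p,t ∈ (0,b): ‖exp(−ln(t/p)·(v₋∧v₊)) ∘ χ(t) ∘ exp(ln(t/p)·(v₋∧v₊))‖ ≤ C·((t/p)^{−ζ} + (t/p)^{ζ}). Moreover, for each p ∈ (0,b), the bounding function t ↦ (t/p)^{−ζ} + (t/p)^{ζ} is integrable over (0,b), and t·((t/p)^{−ζ} + (t/p)^{ζ}) → 0 as t → 0⁺. -/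
open scoped BigOperators Topology
open Filter Set MeasureTheory

noncomputable section

abbrev E (n : ℕ) := EuclideanSpace ℝ (Fin (n + 2))

/-- Minkowski inner product of signature (n+1,1). -/
def mink {n : ℕ} (x y : E n) : ℝ :=
  ∑ i, (if i = Fin.last (n + 1) then (-1 : ℝ) else 1) * x i * y i

variable {n : ℕ}

lemma mink_comm (x y : E n) : mink x y = mink y x :=
  Finset.sum_congr rfl fun i _ => by ring

lemma mink_add_right (v x y : E n) : mink v (x + y) = mink v x + mink v y := by
  simp [mink, mul_add, Finset.sum_add_distrib]

lemma mink_smul_right (v : E n) (c : ℝ) (x : E n) : mink v (c • x) = c * mink v x := by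
  unfold mink
  rw [Finset.mul_sum]
  refine Finset.sum_congr rfl fun i _ => ?_
  simp only [PiLp.smul_apply, smul_eq_mul]
  ring

lemma mink_add_left (x y v : E n) : mink (x + y) v = mink x v + mink y v := by
  rw [mink_comm, mink_add_right, mink_comm v x, mink_comm v y]

lemma mink_smul_left (c : ℝ) (x v : E n) : mink (c • x) v = c * mink x v := by
  rw [mink_comm, mink_smul_right, mink_comm v x]

/-- `v ∧ w` as an endomorphism: `x ↦ ⟨v,x⟩ w − ⟨w,x⟩ v`. -/
def wedge {n : ℕ} (v w : E n) : E n →L[ℝ] E n :=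
  LinearMap.toContinuousLinearMap
    { toFun := fun x => mink v x • w - mink w x • v
      map_add' := by
        intro x y
        simp only [mink_add_right, add_smul]
        abel
      map_smul' := by
        intro c x
        simp only [mink_smul_right, RingHom.id_apply, mul_smul, smul_sub] }

/-- rank one endomorphism `vw* : x ↦ ⟨x,w⟩ v`. -/
def rankOne {n : ℕ} (v w : E n) : E n →L[ℝ] E n :=
  LinearMap.toContinuousLinearMap
    { toFun := fun x => mink x w • v
      map_add' := by
        intro x y
        simp only [mink_add_left, add_smul]
      map_smul' := by
        intro c x
        simp only [mink_smul_left, RingHom.id_apply, mul_smul] }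

/-- The exponential of a multiple of an idempotent. -/
lemma exp_smul_of_isIdempotentElem {A : Type*} [NormedRing A] [NormedAlgebra ℝ A]
    [CompleteSpace A] {p : A} (hp : IsIdempotentElem p) (s : ℝ) :
    NormedSpace.exp (s • p) = 1 + (Real.exp s - 1) • p := by
  have h₁ := NormedSpace.exp_series_hasSum_exp' (𝕂 := ℝ) (s • p)
  have h₂ := NormedSpace.exp_series_hasSum_exp' (𝕂 := ℝ) s
  have h₃ := (h₂.smul_const p).add (hasSum_ite_eq (0 : ℕ) (1 - p))
  rw [← Real.exp_eq_exp_ℝ] at h₃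
  have h₄ : (fun k : ℕ => ((k.factorial : ℝ)⁻¹ • s ^ k) • p + if k = 0 then 1 - p else 0) =
      fun k : ℕ => (k.factorial : ℝ)⁻¹ • (s • p) ^ k := by
    funext k
    rcases k with _ | k
    · simp
    · simp [smul_pow, hp.pow_succ_eq, smul_smul]
  rw [h₄] at h₃
  rw [h₁.unique h₃, sub_smul, one_smul]
  abel

/-- The exponential of a difference of multiples of two orthogonal idempotents. -/
lemma exp_smul_sub_of_orthogonal_idempotents {A : Type*} [NormedRing A] [NormedAlgebra ℝ A]
    [CompleteSpace A] {p q : A} (hp : IsIdempotentElem p) (hq : IsIdempotentElem q)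
    (hpq : p * q = 0) (hqp : q * p = 0) (s : ℝ) :
    NormedSpace.exp (s • (p - q)) =
      (1 - p - q) + Real.exp s • p + Real.exp (-s) • q := by
  have hcomm : Commute (s • p) ((-s) • q) := by
    simp [Commute, SemiconjBy, hpq, hqp]
  have hsum : s • (p - q) = s • p + (-s) • q := by
    rw [smul_sub, neg_smul, sub_eq_add_neg]
  let : NormedAlgebra ℚ A := NormedAlgebra.restrictScalars ℚ ℝ A
  rw [hsum, NormedSpace.exp_add_of_commute hcomm, exp_smul_of_isIdempotentElem hp,
    exp_smul_of_isIdempotentElem hq]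
  rw [mul_add, mul_one, add_mul, one_mul, smul_mul_smul_comm, hpq, smul_zero, sub_smul, sub_smul,
    one_smul, one_smul]
  abel

/-- If the two extremal components `p * x * q` and `q * x * p` vanish, conjugation of `x` by
`exp (s • (p - q))` grows at most like `exp s + exp (-s)`. -/
lemma norm_exp_conj_le_of_orthogonal_idempotents {A : Type*} [NormedRing A] [NormedAlgebra ℝ A]
    [CompleteSpace A] {p q x : A} (hp : IsIdempotentElem p) (hq : IsIdempotentElem q)
    (hpq : p * q = 0) (hqp : q * p = 0) (hpx : p * x * q = 0) (hqx : q * x * p = 0) (s : ℝ) :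
    ‖NormedSpace.exp ((-s) • (p - q)) * x * NormedSpace.exp (s • (p - q))‖ ≤
      5 * (‖1 - p - q‖ + ‖p‖ + ‖q‖) ^ 2 * ‖x‖ * (Real.exp (-s) + Real.exp s) := by
  rw [exp_smul_sub_of_orthogonal_idempotents hp hq hpq hqp,
    exp_smul_sub_of_orthogonal_idempotents hp hq hpq hqp, neg_neg]
  set r := 1 - p - q
  set M := ‖r‖ + ‖p‖ + ‖q‖
  have hee : Real.exp (-s) * Real.exp s = 1 := by rw [← Real.exp_add]; simp
  have hexp : (r + Real.exp (-s) • p + Real.exp s • q) * x *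
      (r + Real.exp s • p + Real.exp (-s) • q) =
      (r * x * r + p * x * p + q * x * q) + Real.exp (-s) • (p * x * r + r * x * q) +
        Real.exp s • (q * x * r + r * x * p) := by
    simp only [add_mul, mul_add, smul_mul_assoc, mul_smul_comm, smul_smul, hpx, hqx, hee,
      mul_comm (Real.exp s) (Real.exp (-s)), smul_zero, smul_add, one_smul]
    abel
  have hM : ∀ a b : A, ‖a‖ ≤ M → ‖b‖ ≤ M → ‖a * x * b‖ ≤ M ^ 2 * ‖x‖ := by
    intro a b ha hb
    calc ‖a * x * b‖ ≤ ‖a‖ * ‖x‖ * ‖b‖ := norm_mul₃_le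
      _ ≤ M * ‖x‖ * M := by gcongr
      _ = M ^ 2 * ‖x‖ := by ring
  have hr : ‖r‖ ≤ M := by linarith [norm_nonneg p, norm_nonneg q]
  have hp' : ‖p‖ ≤ M := by linarith [norm_nonneg r, norm_nonneg q]
  have hq' : ‖q‖ ≤ M := by linarith [norm_nonneg p, norm_nonneg r]
  have hone : 1 ≤ Real.exp (-s) + Real.exp s := by
    linarith [Real.add_one_le_exp s, Real.add_one_le_exp (-s)]
  have hK : 0 ≤ M ^ 2 * ‖x‖ := by positivity
  rw [hexp]
  calc _ ≤ (M ^ 2 * ‖x‖ + M ^ 2 * ‖x‖ + M ^ 2 * ‖x‖) +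
        Real.exp (-s) * (M ^ 2 * ‖x‖ + M ^ 2 * ‖x‖) +
        Real.exp s * (M ^ 2 * ‖x‖ + M ^ 2 * ‖x‖) := by
        refine norm_add₃_le.trans ?_
        simp only [norm_smul, Real.norm_eq_abs, Real.abs_exp]
        gcongr
        · exact norm_add₃_le.trans
            (add_le_add_three (hM _ _ hr hr) (hM _ _ hp' hp') (hM _ _ hq' hq'))
        · exact norm_add_le_of_le (hM _ _ hp' hr) (hM _ _ hr hq')
        · exact norm_add_le_of_le (hM _ _ hq' hr) (hM _ _ hr hp')
    _ ≤ _ := by nlinarith [mul_nonneg hK (sub_nonneg.2 hone)]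

lemma integrableOn_div_rpow {r b p : ℝ} (hr : -1 < r) (hb : 0 < b) (hp : 0 < p) :
    IntegrableOn (fun t : ℝ => (t / p) ^ r) (Set.Ioo 0 b) := by
  have h := ((intervalIntegral.integrableOn_Ioo_rpow_iff hb).2 hr).div_const (p ^ r)
  exact IntegrableOn.congr_fun h (fun t ht => (Real.div_rpow ht.1.le hp.le r).symm) measurableSet_Ioo

lemma tendsto_mul_div_rpow {r p : ℝ} (hr : -1 < r) (hp : 0 < p) :
    Tendsto (fun t : ℝ => t * (t / p) ^ r) (𝓝[>] 0) (𝓝 0) := by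
  have hc : ContinuousAt (fun t : ℝ => p * (t / p) ^ (1 + r)) 0 :=
    continuousAt_const.mul
      ((continuousAt_id.div_const p).rpow_const (Or.inr (by linarith)))
  have h := hc.tendsto.mono_left (nhdsWithin_le_nhds (s := Set.Ioi 0))
  rw [zero_div, Real.zero_rpow (by linarith), mul_zero] at h
  refine h.congr' ?_
  filter_upwards [self_mem_nhdsWithin] with t ht
  rw [Real.rpow_add (div_pos ht hp), Real.rpow_one]
  field_simp

lemma wedge_apply (v w x : E n) : wedge v w x = mink v x • w - mink w x • v := rfl

lemma rankOne_apply (v w x : E n) : rankOne v w x = mink x w • v := rfl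

lemma rankOne_zero_left (w : E n) : rankOne 0 w = 0 := by
  ext1 x
  simp [rankOne_apply]

lemma rankOne_mul_mul_rankOne (v w v₁ w₁ : E n) (X : E n →L[ℝ] E n) :
    rankOne v w * X * rankOne v₁ w₁ = rankOne (mink (X v₁) w • v) w₁ := by
  ext1 x
  simp only [mul_apply_eq_comp, rankOne_apply, map_smul, smul_smul]

lemma rankOne_mul_rankOne (v w v₁ w₁ : E n) :
    rankOne v w * rankOne v₁ w₁ = rankOne (mink v₁ w • v) w₁ := by
  simpa using rankOne_mul_mul_rankOne v w v₁ w₁ 1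

/-- Conjugation of a skew-adjoint endomorphism by the boosts generated by two null vectors. -/
lemma exists_norm_exp_wedge_conj_le (vp vm : E n) (hvp : mink vp vp = 0) (hvm : mink vm vm = 0)
    (hζ : mink vp vm ≠ 0) :
    ∃ K : ℝ, 0 ≤ K ∧ ∀ X : E n →L[ℝ] E n, (∀ x y, mink (X x) y = -mink x (X y)) → ∀ s : ℝ,
      ‖NormedSpace.exp ((-s) • wedge vm vp) * X * NormedSpace.exp (s • wedge vm vp)‖ ≤
        K * ‖X‖ * (Real.exp (-(s * mink vp vm)) + Real.exp (s * mink vp vm)) := by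
  set ζ := mink vp vm with hζdef
  have hζ' : mink vm vp = ζ := mink_comm vm vp
  set p := rankOne (ζ⁻¹ • vp) vm with hp
  set q := rankOne (ζ⁻¹ • vm) vp with hq
  refine ⟨5 * (‖1 - p - q‖ + ‖p‖ + ‖q‖) ^ 2, by positivity, fun X hX s => ?_⟩
  have hnull : ∀ v, mink (X v) v = 0 := fun v => by
    have h := hX v v
    rw [mink_comm v] at h
    linarith
  have hwedge : ∀ c : ℝ, c • wedge vm vp = (c * ζ) • (p - q) := fun c => by
    ext1 x
    simp [wedge_apply, hp, hq, rankOne_apply, mink_comm x, smul_sub, smul_smul, hζ, mul_assoc,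
      mul_left_comm ζ]
  rw [hwedge, hwedge, neg_mul]
  apply norm_exp_conj_le_of_orthogonal_idempotents
  · simp [IsIdempotentElem, hp, rankOne_mul_rankOne, mink_smul_left, ← hζdef, hζ]
  · simp [IsIdempotentElem, hq, rankOne_mul_rankOne, mink_smul_left, hζ', hζ]
  · simp [hp, hq, rankOne_mul_rankOne, mink_smul_left, rankOne_zero_left, hvm]
  · simp [hp, hq, rankOne_mul_rankOne, mink_smul_left, rankOne_zero_left, hvp]
  · simp [hp, hq, rankOne_mul_mul_rankOne, mink_smul_left, rankOne_zero_left, hnull]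
  · simp [hp, hq, rankOne_mul_mul_rankOne, mink_smul_left, rankOne_zero_left, hnull]

/-- Lemma 3.2, Minkowski case. -/
theorem stmt5 {n : ℕ} (vp vm : E n)
    (hvp : mink vp vp = 0) (hvm : mink vm vm = 0)
    (hζ0 : 0 < mink vp vm) (hζ1 : mink vp vm < 1)
    (b : ℝ) (hb : 0 < b) (χ : ℝ → E n →L[ℝ] E n)
    (hχc : ContinuousOn χ (Set.Ioo 0 b))
    (hχb : ∃ D : ℝ, ∀ t ∈ Set.Ioo (0:ℝ) b, ‖χ t‖ ≤ D)
    (hχskew : ∀ t ∈ Set.Ioo (0:ℝ) b, ∀ x y : E n, mink (χ t x) y = - mink x (χ t y)) :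
    (∃ C : ℝ, ∀ p ∈ Set.Ioo (0:ℝ) b, ∀ t ∈ Set.Ioo (0:ℝ) b,
        ‖NormedSpace.exp ((-Real.log (t / p)) • wedge vm vp) * χ t *
            NormedSpace.exp ((Real.log (t / p)) • wedge vm vp)‖ ≤
          C * ((t / p) ^ (-(mink vp vm)) + (t / p) ^ (mink vp vm))) ∧
    ∀ p ∈ Set.Ioo (0:ℝ) b,
      IntegrableOn (fun t : ℝ => (t / p) ^ (-(mink vp vm)) + (t / p) ^ (mink vp vm))
          (Set.Ioo 0 b) ∧
      Tendsto (fun t : ℝ => t * ((t / p) ^ (-(mink vp vm)) + (t / p) ^ (mink vp vm)))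
        (𝓝[>] 0) (𝓝 0) := by
  refine ⟨?_, fun p hp => ⟨?_, ?_⟩⟩
  · obtain ⟨D, hD⟩ := hχb
    obtain ⟨K, hK0, hK⟩ := exists_norm_exp_wedge_conj_le vp vm hvp hvm hζ0.ne'
    refine ⟨K * D, fun p hp t ht => ?_⟩
    have hpos : 0 < t / p := div_pos ht.1 hp.1
    rw [Real.rpow_def_of_pos hpos, Real.rpow_def_of_pos hpos, mul_neg]
    refine (hK (χ t) (hχskew t ht) (Real.log (t / p))).trans ?_
    gcongr
    exact hD t ht
  · exact (integrableOn_div_rpow (by linarith) hb hp.1).add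
      (integrableOn_div_rpow (by linarith) hb hp.1)
  · simpa [mul_add] using (tendsto_mul_div_rpow (r := -mink vp vm) (by linarith) hp.1).add
      (tendsto_mul_div_rpow (r := mink vp vm) (by linarith) hp.1)
end
end

section
/- Let v₀ ∈ ℝ^{n+2} be null and nonzero, let w̃ satisfy ⟨v₀,w̃⟩ = 0 and ‖w̃‖² > 0, set A := v₀∧w̃, let b > 0, and let χ:(0,b) → End(ℝ^{n+2}) be continuous and bounded. Then there is a constant C such that for all p,t ∈ (0,b): ‖exp(−ln(t/p)·A) ∘ χ(t) ∘ exp(ln(t/p)·A)‖ ≤ C·(1 + (ln(t/p))²)². Moreover, for each p ∈ (0,b) the function t ↦ (1 + (ln(t/p))²)² is integrable over (0,b), t·(1 + (ln(t/p))²)² → 0 as t → 0⁺, and ∫₀^p (1 + (ln(t/p))²)² dt → 0 as p → 0⁺. -/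
open scoped BigOperators Topology
open Filter Set MeasureTheory

noncomputable section

variable {n : ℕ}

lemma mink_neg_right (v x : E n) : mink v (-x) = -mink v x := by
  rw [← neg_one_smul ℝ x, mink_smul_right, neg_one_mul]

lemma mink_sub_right (v x y : E n) : mink v (x - y) = mink v x - mink v y := by
  rw [sub_eq_add_neg, mink_add_right, mink_neg_right, ← sub_eq_add_neg]

/-- An infinitesimal rotation in a degenerate plane is nilpotent of order three. -/
lemma wedge_pow_three {v w : E n} (hv : mink v v = 0) (hvw : mink v w = 0) :
    wedge v w ^ 3 = 0 := by
  ext1 x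
  have hwv : mink w v = 0 := by rw [mink_comm, hvw]
  simp [pow_succ, wedge_apply, mink_sub_right, mink_neg_right, mink_smul_right, hv, hvw, hwv]

lemma exp_eq_of_pow_three_eq_zero {R : Type*} [NormedRing R] [NormedAlgebra ℝ R]
    {a : R} (ha : a ^ 3 = 0) :
    NormedSpace.exp a = 1 + a + (2⁻¹ : ℝ) • a ^ 2 := by
  rw [NormedSpace.exp_eq_tsum ℝ]
  dsimp only
  rw [tsum_eq_sum (s := Finset.range 3)]
  · simp [Finset.sum_range_succ]
  · intro k hk
    rw [pow_eq_zero_of_le (by simpa using hk) ha, smul_zero]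

lemma norm_exp_smul_le_of_pow_three_eq_zero {R : Type*} [NormedRing R] [NormedAlgebra ℝ R]
    {a : R} (ha : a ^ 3 = 0) (s : ℝ) :
    ‖NormedSpace.exp (s • a)‖ ≤ (‖(1 : R)‖ + ‖a‖ + ‖a ^ 2‖) * (1 + s ^ 2) := by
  rw [exp_eq_of_pow_three_eq_zero (by rw [smul_pow, ha, smul_zero]), smul_pow, smul_smul]
  refine (norm_add₃_le).trans ?_
  rw [norm_smul, norm_smul, Real.norm_eq_abs, Real.norm_eq_abs,
    abs_of_nonneg (by positivity : 0 ≤ 2⁻¹ * s ^ 2)]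
  have hs : |s| ≤ 1 + s ^ 2 := by
    nlinarith [sq_nonneg (|s| - 1), sq_abs s, abs_nonneg s]
  have h1 : 1 ≤ 1 + s ^ 2 := by nlinarith [sq_nonneg s]
  have h2 : 2⁻¹ * s ^ 2 ≤ 1 + s ^ 2 := by nlinarith [sq_nonneg s]
  nlinarith [mul_le_mul_of_nonneg_right hs (norm_nonneg a),
    mul_le_mul_of_nonneg_right h1 (norm_nonneg (1 : R)),
    mul_le_mul_of_nonneg_right h2 (norm_nonneg (a ^ 2))]

lemma one_add_sq_log_sq_le {x : ℝ} (hx : 0 < x) :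
    (1 + Real.log x ^ 2) ^ 2 ≤
      1024 * (x ^ (1 / 2 : ℝ) + 2 + x ^ (-1 / 2 : ℝ)) := by
  set u := Real.log x
  have hc : 1 + u ^ 2 ≤ 64 * Real.cosh (u / 4) := by
    have h1 := Real.exp_abs_le (u / 4)
    have h2 := Real.quadratic_le_exp_of_nonneg (abs_nonneg (u / 4))
    rw [sq_abs] at h2
    rw [Real.cosh_eq]
    nlinarith [abs_nonneg (u / 4)]
  have he : (64 * Real.cosh (u / 4)) ^ 2 =
      1024 * (x ^ (1 / 2 : ℝ) + 2 + x ^ (-1 / 2 : ℝ)) := by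
    have h1 : x ^ (1 / 2 : ℝ) = Real.exp (u / 4) ^ 2 := by
      rw [Real.rpow_def_of_pos hx, ← Real.exp_nat_mul]; congr 1; push_cast; ring
    have h2 : x ^ (-1 / 2 : ℝ) = Real.exp (-(u / 4)) ^ 2 := by
      rw [Real.rpow_def_of_pos hx, ← Real.exp_nat_mul]; congr 1; push_cast; ring
    have h3 : Real.exp (u / 4) * Real.exp (-(u / 4)) = 1 := by
      rw [← Real.exp_add, add_neg_cancel, Real.exp_zero]
    rw [h1, h2, Real.cosh_eq]
    linear_combination 2048 * h3
  rw [← he]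
  gcongr

lemma integrableOn_one_add_sq_log_sq (b : ℝ) {p : ℝ} (hp : 0 < p) :
    IntegrableOn (fun t : ℝ => (1 + Real.log (t / p) ^ 2) ^ 2) (Ioo 0 b) := by
  have hr : ∀ r : ℝ, -1 < r → IntegrableOn (fun t : ℝ => (t / p) ^ r) (Ioo 0 b) := by
    intro r hr
    have h : IntegrableOn (fun t : ℝ => t ^ r / p ^ r) (Ioo 0 b) :=
      ((intervalIntegral.intervalIntegrable_rpow' (a := 0) (b := b) hr).1.mono_set
        Ioo_subset_Ioc_self).div_const _
    exact h.congr_fun (fun t ht => (Real.div_rpow ht.1.le hp.le r).symm) measurableSet_Ioo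
  have hbound : IntegrableOn
      (fun t : ℝ => 1024 * ((t / p) ^ (1 / 2 : ℝ) + 2 + (t / p) ^ (-1 / 2 : ℝ))) (Ioo 0 b) :=
    (((hr _ (by norm_num)).add (integrableOn_const (by simp))).add
      (hr _ (by norm_num))).const_mul 1024
  refine hbound.mono' (Measurable.aestronglyMeasurable (by fun_prop)) ?_
  filter_upwards [ae_restrict_mem measurableSet_Ioo] with t ht
  rw [Real.norm_of_nonneg (by positivity)]
  exact one_add_sq_log_sq_le (div_pos ht.1 hp)

lemma tendsto_mul_one_add_sq_log_sq :
    Tendsto (fun x : ℝ => x * (1 + Real.log x ^ 2) ^ 2) (𝓝[>] 0) (𝓝 0) := by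
  have hlim : Tendsto (fun x : ℝ => 1024 * (x ^ (3 / 2 : ℝ) + 2 * x + x ^ (1 / 2 : ℝ)))
      (𝓝[>] 0) (𝓝 0) := by
    have hc : Continuous (fun x : ℝ => 1024 * (x ^ (3 / 2 : ℝ) + 2 * x + x ^ (1 / 2 : ℝ))) := by
      have h3 := Real.continuous_rpow_const (q := 3 / 2) (by norm_num)
      have h1 := Real.continuous_rpow_const (q := 1 / 2) (by norm_num)
      fun_prop
    have h := hc.tendsto 0
    norm_num at h
    exact h.mono_left nhdsWithin_le_nhds
  refine tendsto_of_tendsto_of_tendsto_of_le_of_le' tendsto_const_nhds hlim ?_ ?_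
  · filter_upwards [self_mem_nhdsWithin] with x hx
    have : 0 < x := hx
    positivity
  · filter_upwards [self_mem_nhdsWithin] with x (hx : 0 < x)
    refine (mul_le_mul_of_nonneg_left (one_add_sq_log_sq_le hx) hx.le).trans_eq ?_
    rw [show (3 / 2 : ℝ) = 1 + 1 / 2 by norm_num, Real.rpow_add hx,
      show (1 / 2 : ℝ) = 1 + -1 / 2 by norm_num, Real.rpow_add hx, Real.rpow_one]
    ring

lemma setIntegral_Ioo_comp_div (f : ℝ → ℝ) {p : ℝ} (hp : 0 < p) :
    ∫ t in Ioo 0 p, f (t / p) = p * ∫ x in Ioo (0 : ℝ) 1, f x := by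
  rw [← integral_Ioc_eq_integral_Ioo, ← integral_Ioc_eq_integral_Ioo,
    ← intervalIntegral.integral_of_le hp.le, ← intervalIntegral.integral_of_le zero_le_one,
    intervalIntegral.integral_comp_div f hp.ne', zero_div, div_self hp.ne', smul_eq_mul]

/-- Lemma 3.2, degenerate case. -/
theorem stmt6 {n : ℕ} (v0 w : E n)
    (h0 : mink v0 v0 = 0) (hv0 : v0 ≠ 0)
    (horth : mink v0 w = 0) (hw : 0 < mink w w)
    (b : ℝ) (hb : 0 < b) (χ : ℝ → E n →L[ℝ] E n)
    (hχc : ContinuousOn χ (Set.Ioo 0 b))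
    (hχb : ∃ D : ℝ, ∀ t ∈ Set.Ioo (0:ℝ) b, ‖χ t‖ ≤ D) :
    (∃ C : ℝ, ∀ p ∈ Set.Ioo (0:ℝ) b, ∀ t ∈ Set.Ioo (0:ℝ) b,
        ‖NormedSpace.exp ((-Real.log (t / p)) • wedge v0 w) * χ t *
            NormedSpace.exp ((Real.log (t / p)) • wedge v0 w)‖ ≤
          C * (1 + (Real.log (t / p)) ^ 2) ^ 2) ∧
    (∀ p ∈ Set.Ioo (0:ℝ) b,
      IntegrableOn (fun t : ℝ => (1 + (Real.log (t / p)) ^ 2) ^ 2) (Set.Ioo 0 b) ∧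
      Tendsto (fun t : ℝ => t * (1 + (Real.log (t / p)) ^ 2) ^ 2) (𝓝[>] 0) (𝓝 0)) ∧
    Tendsto (fun p : ℝ => ∫ t in Set.Ioo (0:ℝ) p, (1 + (Real.log (t / p)) ^ 2) ^ 2)
      (𝓝[>] 0) (𝓝 0) := by
  obtain ⟨D, hD⟩ := hχb
  have hA := wedge_pow_three h0 horth
  refine ⟨?_, fun p hp => ⟨integrableOn_one_add_sq_log_sq b hp.1, ?_⟩, ?_⟩
  · set K := ‖(1 : E n →L[ℝ] E n)‖ + ‖wedge v0 w‖ + ‖wedge v0 w ^ 2‖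
    refine ⟨K * D * K, fun p _ t ht => ?_⟩
    set s := Real.log (t / p)
    have hneg : ‖NormedSpace.exp ((-s) • wedge v0 w)‖ ≤ K * (1 + s ^ 2) := by
      simpa only [neg_sq] using norm_exp_smul_le_of_pow_three_eq_zero hA (-s)
    have hpos : ‖NormedSpace.exp (s • wedge v0 w)‖ ≤ K * (1 + s ^ 2) :=
      norm_exp_smul_le_of_pow_three_eq_zero hA s
    have hD0 : 0 ≤ D := (norm_nonneg _).trans (hD t ht)
    calc _ ≤ ‖NormedSpace.exp ((-s) • wedge v0 w)‖ * ‖χ t‖ *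
          ‖NormedSpace.exp (s • wedge v0 w)‖ := norm_mul₃_le
      _ ≤ K * (1 + s ^ 2) * D * (K * (1 + s ^ 2)) := by
        gcongr
        exact hD t ht
      _ = K * D * K * (1 + s ^ 2) ^ 2 := by ring
  · have hdiv : Tendsto (fun t : ℝ => t / p) (𝓝[>] 0) (𝓝[>] 0) := by
      refine tendsto_nhdsWithin_iff.2 ⟨?_, ?_⟩
      · have h : Tendsto (fun t : ℝ => t / p) (𝓝 0) (𝓝 (0 / p)) := tendsto_id.div_const p
        rw [zero_div] at h
        exact h.mono_left nhdsWithin_le_nhds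
      · filter_upwards [self_mem_nhdsWithin] with t ht
        exact div_pos ht hp.1
    have h := (tendsto_mul_one_add_sq_log_sq.comp hdiv).const_mul p
    rw [mul_zero] at h
    refine h.congr fun t => ?_
    simp only [Function.comp_apply]
    rw [← mul_assoc, mul_div_cancel₀ _ hp.1.ne']
  · have h : Tendsto (fun p : ℝ => p * ∫ x in Ioo (0 : ℝ) 1, (1 + Real.log x ^ 2) ^ 2)
        (𝓝[>] 0) (𝓝 0) := by
      have h := (tendsto_id (x := 𝓝 (0 : ℝ))).mul_const
        (∫ x in Ioo (0 : ℝ) 1, (1 + Real.log x ^ 2) ^ 2)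
      rw [zero_mul] at h
      exact h.mono_left nhdsWithin_le_nhds
    refine h.congr' ?_
    filter_upwards [self_mem_nhdsWithin] with p hp
    exact (setIntegral_Ioo_comp_div (fun x => (1 + Real.log x ^ 2) ^ 2) hp).symm
end
end
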